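/- arXiv:1906.08997 — 2 statements merged into one kernel-verified Lean document; each statement's English description precedes it below -/
import Mathlib

section
/- For every tripartite density matrix ρ_ABB' on ℂ^{d_A}⊗ℂ^{d_B}⊗ℂ^{d_B'}, the identity D_{B|A}(ρ_AB) + D_{B'|A}(ρ_AB') − D_{BB'|A}(ρ_ABB') = I_{B:B'|A}(ρ_ÃBB') − I_{B:B'|A}(ρ_ABB') holds, where ρ_AB = tr_{B'}(ρ_ABB'), ρ_AB' = tr_B(ρ_ABB'), and ρ_ÃBB' = (Δ_A⊗id⊗id)(ρ_ABB'). -/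
open Matrix Kronecker BigOperators
open scoped ComplexOrder

noncomputable section

/-- The completely dephasing map `Δ`: keeps only the diagonal entries. -/
def deph {n : Type*} [DecidableEq n] (M : Matrix n n ℂ) : Matrix n n ℂ :=
  Matrix.of fun i j => if i = j then M i j else 0

/-- A density matrix: positive semidefinite with unit trace. -/
def IsDensityMatrix {n : Type*} [Fintype n] (ρ : Matrix n n ℂ) : Prop :=
  ρ.PosSemidef ∧ ρ.trace = 1

/-- Von Neumann entropy (base 2): `S(ρ) = -∑ λ_k log₂ λ_k`. -/
def vnEntropy {n : Type*} [Fintype n] [DecidableEq n] (ρ : Matrix n n ℂ) : ℝ :=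
  if h : ρ.IsHermitian then -∑ k, h.eigenvalues k * Real.logb 2 (h.eigenvalues k) else 0

/-- Partial trace over the second factor: `ρ_A = tr_B ρ_AB`. -/
def ptrB {A B : Type*} [Fintype B] (ρ : Matrix (A × B) (A × B) ℂ) : Matrix A A ℂ :=
  Matrix.of fun a a' => ∑ b, ρ (a, b) (a', b)

/-- Partial trace over the first factor: `ρ_B = tr_A ρ_AB`. -/
def ptrA {A B : Type*} [Fintype A] (ρ : Matrix (A × B) (A × B) ℂ) : Matrix B B ℂ :=
  Matrix.of fun b b' => ∑ a, ρ (a, b) (a, b')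

/-- `p_i = tr((|i⟩⟨i|⊗1) ρ_AB)`. -/
def probA {A B : Type*} [Fintype B] (ρ : Matrix (A × B) (A × B) ℂ) (i : A) : ℝ :=
  (∑ b, ρ (i, b) (i, b)).re

/-- `ρ_{B|i} = tr_A((|i⟩⟨i|⊗1) ρ_AB) / p_i`. -/
def condB {A B : Type*} [Fintype B] (ρ : Matrix (A × B) (A × B) ℂ) (i : A) :
    Matrix B B ℂ :=
  ((probA ρ i : ℝ) : ℂ)⁻¹ • Matrix.of fun b b' => ρ (i, b) (i, b')

/-- Quantum discord based on incoherent measurement: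
`D_{B|A}(ρ) = ∑ᵢ pᵢ S(ρ_{B|i}) + S(ρ_A) − S(ρ_AB)`. -/
def QDI {A B : Type*} [Fintype A] [Fintype B] [DecidableEq A] [DecidableEq B]
    (ρ : Matrix (A × B) (A × B) ℂ) : ℝ :=
  (∑ i, probA ρ i * vnEntropy (condB ρ i)) + vnEntropy (ptrB ρ) - vnEntropy ρ

/-- Dephasing on the first subsystem: `Δ_A ⊗ id`. -/
def dephA {A B : Type*} [DecidableEq A] (ρ : Matrix (A × B) (A × B) ℂ) :
    Matrix (A × B) (A × B) ℂ :=
  Matrix.of fun p q => if p.1 = q.1 then ρ p q else 0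

/-- Dephasing on the second subsystem: `id ⊗ Δ_B`. -/
def dephB {A B : Type*} [DecidableEq B] (ρ : Matrix (A × B) (A × B) ℂ) :
    Matrix (A × B) (A × B) ℂ :=
  Matrix.of fun p q => if p.2 = q.2 then ρ p q else 0

/-- Trace out the last system of a tripartite state on `A × (B × B')`, leaving `A × B`. -/
def ptrB2 {A B B' : Type*} [Fintype B'] (ρ : Matrix (A × B × B') (A × B × B') ℂ) :
    Matrix (A × B) (A × B) ℂ :=
  Matrix.of fun p q => ∑ c, ρ (p.1, p.2, c) (q.1, q.2, c)

/-- Trace out the middle system of a tripartite state on `A × (B × B')`, leaving `A × B'`. -/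
def ptrB1 {A B B' : Type*} [Fintype B] (ρ : Matrix (A × B × B') (A × B × B') ℂ) :
    Matrix (A × B') (A × B') ℂ :=
  Matrix.of fun p q => ∑ b, ρ (p.1, b, p.2) (q.1, b, q.2)

/-- Conditional mutual information
`I_{B:B'|A}(ρ) = S(ρ_AB) + S(ρ_AB') − S(ρ_ABB') − S(ρ_A)`. -/
def condMutInfo {A B B' : Type*} [Fintype A] [Fintype B] [Fintype B']
    [DecidableEq A] [DecidableEq B] [DecidableEq B']
    (ρ : Matrix (A × B × B') (A × B × B') ℂ) : ℝ :=
  vnEntropy (ptrB2 ρ) + vnEntropy (ptrB1 ρ) - vnEntropy ρ - vnEntropy (ptrB ρ)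

/-!
Write `S(B|A) = S(ρ_AB) - S(ρ_A)`. Measuring `A` in the incoherent basis turns `ρ` into the
block-diagonal state `Δ_A ρ`, whose entropy is the Shannon entropy of `p` plus the average entropy
of the normalized blocks, while `(Δ_A ρ)_A = diag p`. Hence `∑ᵢ pᵢ S(ρ_{B|i})` is the conditional
entropy of `Δ_A ρ`, and the discord is the conditional entropy gained by dephasing. On the other
hand `I_{B:B'|A} = S(B|A) + S(B'|A) - S(BB'|A)`, and both partial traces commute with `Δ_A`, so the
two sides of the identity are the same combination of conditional entropies.
-/

section Spectrum

variable {n : Type*} [Fintype n] [DecidableEq n] {M : Matrix n n ℂ}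

lemma vnEntropy_eq_sum_eigenvalues (hM : M.IsHermitian) :
    vnEntropy M = (∑ i, Real.negMulLog (hM.eigenvalues i)) / Real.log 2 := by
  simp only [vnEntropy, dif_pos hM, Real.negMulLog, Real.logb, Finset.sum_div,
    ← Finset.sum_neg_distrib, neg_mul, neg_div, mul_div_assoc]

lemma vnEntropy_of_charpoly_eq {ι : Type*} [Fintype ι] (hM : M.IsHermitian) {x : ι → ℝ}
    (hx : M.charpoly = ∏ i, (Polynomial.X - Polynomial.C (x i : ℂ))) :
    vnEntropy M = (∑ i, Real.negMulLog (x i)) / Real.log 2 := by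
  have hroots : Finset.univ.val.map (fun i => (hM.eigenvalues i : ℂ)) =
      Finset.univ.val.map (fun i => (x i : ℂ)) := by
    have h := hM.roots_charpoly_eq_eigenvalues
    rw [hx, Polynomial.roots_prod _ _
      (Finset.prod_ne_zero_iff.2 fun i _ => Polynomial.X_sub_C_ne_zero _)] at h
    simpa using h.symm
  have hsum := congrArg (fun s => (s.map fun z : ℂ => Real.negMulLog z.re).sum) hroots
  simp only [Multiset.map_map, Function.comp_def, Complex.ofReal_re] at hsum
  rw [vnEntropy_eq_sum_eigenvalues hM]
  exact congrArg (· / Real.log 2) hsum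

lemma vnEntropy_diagonal (x : n → ℝ) :
    vnEntropy (diagonal fun i => (x i : ℂ)) = (∑ i, Real.negMulLog (x i)) / Real.log 2 :=
  vnEntropy_of_charpoly_eq (isHermitian_diagonal_iff.2 fun _ => Complex.conj_ofReal _)
    (charpoly_diagonal _)

lemma vnEntropy_reindex {m : Type*} [Fintype m] [DecidableEq m] (e : n ≃ m)
    (hM : M.IsHermitian) : vnEntropy (reindex e e M) = vnEntropy M := by
  rw [vnEntropy_eq_sum_eigenvalues hM]
  exact vnEntropy_of_charpoly_eq (hM.submatrix _) ((charpoly_reindex e M).trans hM.charpoly_eq)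

lemma charpoly_ofReal_smul (hM : M.IsHermitian) (c : ℝ) :
    ((c : ℂ) • M).charpoly =
      ∏ i, (Polynomial.X - Polynomial.C ((c * hM.eigenvalues i : ℝ) : ℂ)) := by
  have hcfc : cfc (c * ·) M = (c : ℂ) • M := by
    rw [cfc_const_mul_id c M hM.isSelfAdjoint]
    exact (Complex.coe_smul c M).symm
  rw [← hcfc]
  exact hM.charpoly_cfc_eq _

lemma vnEntropy_ofReal_smul (hM : M.IsHermitian) (c : ℝ) :
    vnEntropy ((c : ℂ) • M) =
      c * vnEntropy M + M.trace.re * (Real.negMulLog c / Real.log 2) := by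
  have hcM : ((c : ℂ) • M).IsHermitian := hM.smul (Complex.conj_ofReal c)
  have htrace : M.trace.re = ∑ i, hM.eigenvalues i := by
    simp [hM.trace_eq_sum_eigenvalues]
  rw [vnEntropy_of_charpoly_eq hcM (charpoly_ofReal_smul hM c), vnEntropy_eq_sum_eigenvalues hM,
    htrace]
  simp only [Real.negMulLog_mul, Finset.sum_add_distrib, ← Finset.mul_sum, ← Finset.sum_mul]
  ring

lemma trace_mul_vnEntropy_inv_trace_smul (hM : M.PosSemidef) :
    M.trace.re * vnEntropy ((M.trace.re : ℂ)⁻¹ • M) =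
      vnEntropy M - Real.negMulLog M.trace.re / Real.log 2 := by
  by_cases hp : M.trace.re = 0
  · have htrace : M.trace = 0 := Complex.ext hp (Complex.nonneg_iff.1 hM.trace_nonneg).2.symm
    obtain rfl := hM.trace_eq_zero_iff.1 htrace
    simpa using (vnEntropy_diagonal fun _ : n => 0).symm
  · rw [← Complex.ofReal_inv, vnEntropy_ofReal_smul hM.isHermitian]
    simp only [Real.negMulLog, Real.log_inv]
    field_simp
    ring

end Spectrum

section BlockDiagonal

variable {m o : Type*} [Fintype m] [DecidableEq m] [Fintype o] [DecidableEq o]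

lemma charmatrix_blockDiagonal {R : Type*} [CommRing R] (d : o → Matrix m m R) :
    (blockDiagonal d).charmatrix = blockDiagonal fun i => (d i).charmatrix := by
  ext1 ⟨b, a⟩ ⟨b', a'⟩
  by_cases h : a = a' <;> simp [charmatrix_apply, blockDiagonal_apply, diagonal_apply, h]

lemma charpoly_blockDiagonal {R : Type*} [CommRing R] (d : o → Matrix m m R) :
    (blockDiagonal d).charpoly = ∏ i, (d i).charpoly := by
  simp only [charpoly, charmatrix_blockDiagonal, det_blockDiagonal]

lemma vnEntropy_blockDiagonal {d : o → Matrix m m ℂ} (hd : ∀ i, (d i).IsHermitian) :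
    vnEntropy (blockDiagonal d) = ∑ i, vnEntropy (d i) := by
  have hcharpoly : (blockDiagonal d).charpoly = ∏ ik : o × m,
      (Polynomial.X - Polynomial.C ((hd ik.1).eigenvalues ik.2 : ℂ)) := by
    rw [charpoly_blockDiagonal, Fintype.prod_prod_type]
    exact Finset.prod_congr rfl fun i _ => (hd i).charpoly_eq
  rw [vnEntropy_of_charpoly_eq (isHermitian_blockDiagonal_iff.2 hd) hcharpoly,
    Fintype.sum_prod_type, Finset.sum_div]
  exact Finset.sum_congr rfl fun i _ => (vnEntropy_eq_sum_eigenvalues (hd i)).symm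

end BlockDiagonal

section Bipartite

variable {A B : Type*}

/-- The diagonal block `tr_A((|i⟩⟨i|⊗1) σ)`: the conditional state of `B` given the outcome `i`
on `A`, before normalization by `p_i`. -/
def diagBlock (σ : Matrix (A × B) (A × B) ℂ) (i : A) : Matrix B B ℂ :=
  σ.submatrix (Prod.mk i) (Prod.mk i)

lemma dephA_eq_reindex_blockDiagonal [DecidableEq A] (σ : Matrix (A × B) (A × B) ℂ) :
    dephA σ =
      reindex (Equiv.prodComm B A) (Equiv.prodComm B A) (blockDiagonal (diagBlock σ)) := by
  ext ⟨a, b⟩ ⟨a', b'⟩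
  by_cases h : a = a'
  · subst h
    simp [dephA, diagBlock, blockDiagonal_apply]
  · simp [dephA, blockDiagonal_apply, h]

lemma posSemidef_ptrB [Fintype B] {σ : Matrix (A × B) (A × B) ℂ} (hσ : σ.PosSemidef) :
    (ptrB σ).PosSemidef := by
  have hsum : ptrB σ = ∑ b, σ.submatrix (fun a => (a, b)) (fun a => (a, b)) := by
    ext a a'
    simp [ptrB, Matrix.sum_apply]
  rw [hsum]
  exact posSemidef_sum _ fun b _ => hσ.submatrix _

lemma ptrB_dephA [Fintype B] [DecidableEq A] {σ : Matrix (A × B) (A × B) ℂ}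
    (hσ : σ.IsHermitian) : ptrB (dephA σ) = diagonal fun i => (probA σ i : ℂ) := by
  ext a a'
  by_cases h : a = a'
  · subst h
    simp only [ptrB, dephA, probA, of_apply, if_true, diagonal_apply_eq, Complex.re_sum,
      Complex.ofReal_sum]
    exact Finset.sum_congr rfl fun b _ => (hσ.coe_re_apply_self (a, b)).symm
  · simp [ptrB, dephA, h]

lemma probA_mul_vnEntropy_condB [Fintype B] [DecidableEq B]
    {σ : Matrix (A × B) (A × B) ℂ} (hσ : σ.PosSemidef) (i : A) :
    probA σ i * vnEntropy (condB σ i) =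
      vnEntropy (diagBlock σ i) - Real.negMulLog (probA σ i) / Real.log 2 :=
  trace_mul_vnEntropy_inv_trace_smul (hσ.submatrix (Prod.mk i))

variable [Fintype A] [Fintype B] [DecidableEq A] [DecidableEq B]
  {σ : Matrix (A × B) (A × B) ℂ}

/-- The conditional entropy `S(B|A) = S(σ_AB) - S(σ_A)`, in terms of which both the discord and
the conditional mutual information are expressed. -/
def condEntropy (σ : Matrix (A × B) (A × B) ℂ) : ℝ :=
  vnEntropy σ - vnEntropy (ptrB σ)

lemma vnEntropy_dephA (hσ : σ.IsHermitian) :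
    vnEntropy (dephA σ) = ∑ i, vnEntropy (diagBlock σ i) := by
  have hblock (i : A) : (diagBlock σ i).IsHermitian := hσ.submatrix _
  rw [dephA_eq_reindex_blockDiagonal,
    vnEntropy_reindex _ (isHermitian_blockDiagonal_iff.2 hblock), vnEntropy_blockDiagonal hblock]

lemma sum_probA_mul_vnEntropy_condB (hσ : σ.PosSemidef) :
    ∑ i, probA σ i * vnEntropy (condB σ i) = condEntropy (dephA σ) := by
  simp only [condEntropy, vnEntropy_dephA hσ.isHermitian, ptrB_dephA hσ.isHermitian,
    vnEntropy_diagonal, probA_mul_vnEntropy_condB hσ, Finset.sum_sub_distrib, Finset.sum_div]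

lemma QDI_eq_condEntropy_dephA_sub (hσ : σ.PosSemidef) :
    QDI σ = condEntropy (dephA σ) - condEntropy σ := by
  rw [QDI, sum_probA_mul_vnEntropy_condB hσ, condEntropy, condEntropy]
  ring

end Bipartite

section Tripartite

variable {A B B' : Type*} {ρ : Matrix (A × B × B') (A × B × B') ℂ}

lemma posSemidef_ptrB2 [Fintype B'] (hρ : ρ.PosSemidef) : (ptrB2 ρ).PosSemidef :=
  posSemidef_ptrB (hρ.submatrix fun x : (A × B) × B' => (x.1.1, x.1.2, x.2))

lemma posSemidef_ptrB1 [Fintype B] (hρ : ρ.PosSemidef) : (ptrB1 ρ).PosSemidef :=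
  posSemidef_ptrB (hρ.submatrix fun x : (A × B') × B => (x.1.1, x.2, x.1.2))

lemma ptrB2_dephA [Fintype B'] [DecidableEq A] (ρ : Matrix (A × B × B') (A × B × B') ℂ) :
    ptrB2 (dephA ρ) = dephA (ptrB2 ρ) := by
  ext p q
  by_cases h : p.1 = q.1 <;> simp [ptrB2, dephA, h]

lemma ptrB1_dephA [Fintype B] [DecidableEq A] (ρ : Matrix (A × B × B') (A × B × B') ℂ) :
    ptrB1 (dephA ρ) = dephA (ptrB1 ρ) := by
  ext p q
  by_cases h : p.1 = q.1 <;> simp [ptrB1, dephA, h]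

lemma ptrB_ptrB2 [Fintype B] [Fintype B'] (ρ : Matrix (A × B × B') (A × B × B') ℂ) :
    ptrB (ptrB2 ρ) = ptrB ρ := by
  ext a a'
  simp [ptrB, ptrB2, Fintype.sum_prod_type]

lemma ptrB_ptrB1 [Fintype B] [Fintype B'] (ρ : Matrix (A × B × B') (A × B × B') ℂ) :
    ptrB (ptrB1 ρ) = ptrB ρ := by
  ext a a'
  simp [ptrB, ptrB1, Fintype.sum_prod_type_right]

variable [Fintype A] [Fintype B] [Fintype B'] [DecidableEq A] [DecidableEq B] [DecidableEq B']

lemma condMutInfo_eq_condEntropy (ρ : Matrix (A × B × B') (A × B × B') ℂ) :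
    condMutInfo ρ = condEntropy (ptrB2 ρ) + condEntropy (ptrB1 ρ) - condEntropy ρ := by
  simp only [condMutInfo, condEntropy, ptrB_ptrB2, ptrB_ptrB1]
  ring

theorem stmt15_general (hρ : ρ.PosSemidef) :
    QDI (ptrB2 ρ) + QDI (ptrB1 ρ) - QDI ρ = condMutInfo (dephA ρ) - condMutInfo ρ := by
  rw [QDI_eq_condEntropy_dephA_sub (posSemidef_ptrB2 hρ),
    QDI_eq_condEntropy_dephA_sub (posSemidef_ptrB1 hρ), QDI_eq_condEntropy_dephA_sub hρ,
    condMutInfo_eq_condEntropy, condMutInfo_eq_condEntropy, ptrB2_dephA, ptrB1_dephA]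
  ring

end Tripartite

/-- for every tripartite state,
`D_{B|A}(ρ_AB) + D_{B'|A}(ρ_AB') − D_{BB'|A}(ρ_ABB') = I_{B:B'|A}(ρ_ÃBB') − I_{B:B'|A}(ρ_ABB')`. -/
theorem stmt15 {dA dB dB' : ℕ}
    (ρ : Matrix (Fin dA × Fin dB × Fin dB') (Fin dA × Fin dB × Fin dB') ℂ)
    (hρ : IsDensityMatrix ρ) :
    QDI (ptrB2 ρ) + QDI (ptrB1 ρ) - QDI ρ =
      condMutInfo (dephA ρ) - condMutInfo ρ :=
  stmt15_general hρ.1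
end
end

section
/- Let ρ_AB be a bipartite density matrix on ℂ^{d_A}⊗ℂ^{d_B} and let Λ be a quantum channel on ℂ^{d_A} (given by Kraus operators) that is coherence non-activating, i.e. Δ∘Λ = Δ∘Λ∘Δ as maps on d_A×d_A matrices. Then J(ρ_AB) ≥ J((Λ⊗id_B)(ρ_AB)), where J(σ_AB) = S(σ_B) − Σ_i q_i S(σ_{B|i}) with q_i = tr((|i⟩⟨i|⊗1)σ_AB) and σ_{B|i} = tr_A((|i⟩⟨i|⊗1)σ_AB)/q_i. That is, the incoherent correlation cannot be increased by coherence non-activating operations on A. -/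
/-!
Because the channel is coherence non-activating, the diagonal of `Λ(M)` only depends on the diagonal
of `M`, through the column-stochastic matrix `T j i = ⟨j|Λ(|i⟩⟨i|)|j⟩`. Hence the unnormalised
conditional states of `B` are mixed classically: the block of the output at `j` is
`∑ i, T j i • ρᵢ`, where `ρᵢ` are the blocks of the input. The reduced state of `B` is unchanged,
and concavity of the von Neumann entropy, in its homogeneous form (superadditivity on the positive
cone), shows that the average conditional entropy can only grow. Concavity itself comes from Schur's
observation that the diagonal of a Hermitian matrix in any orthonormal basis is a doubly stochastic
image of its eigenvalues, combined with Jensen's inequality.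
-/

open Matrix Kronecker BigOperators
open scoped ComplexOrder

noncomputable section

/-- The incoherent correlation `J(σ_AB) = S(σ_B) − ∑ᵢ qᵢ S(σ_{B|i})`. -/
def Jinc {A B : Type*} [Fintype A] [Fintype B] [DecidableEq A] [DecidableEq B]
    (σ : Matrix (A × B) (A × B) ℂ) : ℝ :=
  vnEntropy (ptrA σ) - ∑ i, probA σ i * vnEntropy (condB σ i)

section DoublyStochastic

variable {R n : Type*} [Field R] [LinearOrder R] [IsStrictOrderedRing R] [Fintype n] [DecidableEq n]
  {s : Set R} {D : Matrix n n R} {x : n → R}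

theorem mulVec_mem_of_mem_rowStochastic (hs : Convex R s) (hD : D ∈ rowStochastic R n)
    (hx : ∀ i, x i ∈ s) (k : n) : (D *ᵥ x) k ∈ s :=
  hs.sum_mem (fun _ _ => nonneg_of_mem_rowStochastic hD) (sum_row_of_mem_rowStochastic hD k)
    fun i _ => hx i

theorem sum_le_sum_mulVec_of_mem_doublyStochastic {f : R → R} (hf : ConcaveOn R s f)
    (hD : D ∈ doublyStochastic R n) (hx : ∀ i, x i ∈ s) :
    ∑ i, f (x i) ≤ ∑ k, f ((D *ᵥ x) k) :=
  calc ∑ i, f (x i)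
      = ∑ k, ∑ i, D k i * f (x i) := by
        rw [Finset.sum_comm]
        simp only [← Finset.sum_mul, sum_col_of_mem_doublyStochastic hD, one_mul]
    _ ≤ ∑ k, f ((D *ᵥ x) k) := Finset.sum_le_sum fun k _ =>
        hf.le_map_sum (fun _ _ => nonneg_of_mem_doublyStochastic hD)
          (sum_row_of_mem_doublyStochastic hD k) fun i _ => hx i

end DoublyStochastic

section Spectral

variable {𝕜 m n : Type*} [RCLike 𝕜] [Fintype n] [DecidableEq n]

theorem mul_diagonal_mul_conjTranspose_apply_self (W : Matrix m n 𝕜) (d : n → 𝕜) (k : m) :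
    (W * diagonal d * Wᴴ) k k = ∑ i, ((‖W k i‖ ^ 2 : ℝ) : 𝕜) * d i := by
  rw [mul_apply]
  refine Finset.sum_congr rfl fun i _ => ?_
  rw [mul_diagonal, conjTranspose_apply, RCLike.ofReal_pow, ← RCLike.mul_conj, starRingEnd_apply]
  ring

omit [DecidableEq n] in
theorem mul_conjTranspose_apply_self (W : Matrix m n 𝕜) (k : m) :
    (W * Wᴴ) k k = ((∑ i, ‖W k i‖ ^ 2 : ℝ) : 𝕜) := by
  classical
  simpa using mul_diagonal_mul_conjTranspose_apply_self W 1 k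

theorem map_norm_sq_mem_doublyStochastic (W : unitaryGroup n 𝕜) :
    (W : Matrix n n 𝕜).map (‖·‖ ^ 2) ∈ doublyStochastic ℝ n := by
  have sum_row (V : unitaryGroup n 𝕜) (k : n) : ∑ i, ‖(V : Matrix n n 𝕜) k i‖ ^ 2 = 1 := by
    have h := mul_conjTranspose_apply_self (V : Matrix n n 𝕜) k
    rw [← star_eq_conjTranspose, Unitary.mul_star_self_of_mem V.2, one_apply_eq] at h
    exact_mod_cast h.symm
  refine mem_doublyStochastic_iff_sum.2 ⟨fun i j => sq_nonneg _, sum_row W, fun i => ?_⟩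
  simpa using sum_row (star W) i

variable {M : Matrix n n 𝕜}

theorem exists_doublyStochastic_mulVec_eigenvalues (hM : M.IsHermitian) (U : unitaryGroup n 𝕜) :
    ∃ D ∈ doublyStochastic ℝ n, ∀ k,
      RCLike.re ((star (U : Matrix n n 𝕜) * M * U) k k) = (D *ᵥ hM.eigenvalues) k := by
  let W : unitaryGroup n 𝕜 := star U * hM.eigenvectorUnitary
  refine ⟨_, map_norm_sq_mem_doublyStochastic W, fun k => ?_⟩
  have conj_eq : star (U : Matrix n n 𝕜) * M * (U : Matrix n n 𝕜) =
      (W : Matrix n n 𝕜) * diagonal (RCLike.ofReal ∘ hM.eigenvalues) * (W : Matrix n n 𝕜)ᴴ := by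
    conv_lhs => rw [hM.spectral_theorem, Unitary.conjStarAlgAut_apply]
    simp [W, ← star_eq_conjTranspose, Matrix.mul_assoc]
  rw [conj_eq, mul_diagonal_mul_conjTranspose_apply_self, map_sum]
  refine Finset.sum_congr rfl fun i _ => ?_
  rw [RCLike.re_ofReal_mul, Function.comp_apply, RCLike.ofReal_re]
  rfl

variable {s : Set ℝ} {f : ℝ → ℝ}

theorem sum_map_eigenvalues_le_sum_map_diag (hf : ConcaveOn ℝ s f) (hM : M.IsHermitian)
    (hs : ∀ i, hM.eigenvalues i ∈ s) (U : unitaryGroup n 𝕜) :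
    ∑ i, f (hM.eigenvalues i) ≤ ∑ k, f (RCLike.re ((star (U : Matrix n n 𝕜) * M * U) k k)) := by
  obtain ⟨D, hD, hdiag⟩ := exists_doublyStochastic_mulVec_eigenvalues hM U
  simpa only [hdiag] using sum_le_sum_mulVec_of_mem_doublyStochastic hf hD hs

theorem re_diag_mem_of_eigenvalues_mem (hs : Convex ℝ s) (hM : M.IsHermitian)
    (hMs : ∀ i, hM.eigenvalues i ∈ s) (U : unitaryGroup n 𝕜) (k : n) :
    RCLike.re ((star (U : Matrix n n 𝕜) * M * U) k k) ∈ s := by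
  obtain ⟨D, hD, hdiag⟩ := exists_doublyStochastic_mulVec_eigenvalues hM U
  have hD_row : D ∈ rowStochastic ℝ n := mem_rowStochastic.2 ⟨hD.1, hD.2.1⟩
  exact hdiag k ▸ mulVec_mem_of_mem_rowStochastic hs hD_row hMs k

theorem sum_map_eigenvalues_concave {X Y : Matrix n n 𝕜} (hf : ConcaveOn ℝ s f)
    (hX : X.IsHermitian) (hXs : ∀ i, hX.eigenvalues i ∈ s)
    (hY : Y.IsHermitian) (hYs : ∀ i, hY.eigenvalues i ∈ s)
    {a b : ℝ} (ha : 0 ≤ a) (hb : 0 ≤ b) (hab : a + b = 1) (hZ : (a • X + b • Y).IsHermitian) :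
    a * ∑ i, f (hX.eigenvalues i) + b * ∑ i, f (hY.eigenvalues i) ≤
      ∑ i, f (hZ.eigenvalues i) := by
  let V := hZ.eigenvectorUnitary
  let p (M : Matrix n n 𝕜) (k : n) : ℝ := RCLike.re ((star (V : Matrix n n 𝕜) * M * V) k k)
  have p_combo (k : n) : a * p X k + b * p Y k = hZ.eigenvalues k := by
    have h := congr_fun₂ hZ.conjStarAlgAut_star_eigenvectorUnitary k k
    rw [Unitary.conjStarAlgAut_star_apply, diagonal_apply_eq] at h
    have h_re := congrArg RCLike.re h
    rw [Function.comp_apply, RCLike.ofReal_re] at h_re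
    rw [← h_re]
    simp [p, V, Matrix.mul_add, Matrix.add_mul, RCLike.smul_re]
  calc a * ∑ i, f (hX.eigenvalues i) + b * ∑ i, f (hY.eigenvalues i)
      ≤ a * ∑ k, f (p X k) + b * ∑ k, f (p Y k) :=
        add_le_add
          (mul_le_mul_of_nonneg_left (sum_map_eigenvalues_le_sum_map_diag hf hX hXs V) ha)
          (mul_le_mul_of_nonneg_left (sum_map_eigenvalues_le_sum_map_diag hf hY hYs V) hb)
    _ = ∑ k, (a * f (p X k) + b * f (p Y k)) := by
        rw [Finset.mul_sum, Finset.mul_sum, Finset.sum_add_distrib]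
    _ ≤ ∑ k, f (a * p X k + b * p Y k) := Finset.sum_le_sum fun k _ =>
        hf.2 (re_diag_mem_of_eigenvalues_mem hf.1 hX hXs V k)
          (re_diag_mem_of_eigenvalues_mem hf.1 hY hYs V k) ha hb hab
    _ = ∑ i, f (hZ.eigenvalues i) := by simp only [p_combo]

end Spectral

section Entropy

variable {ι n : Type*} [Fintype n]

theorem re_trace_smul_inv_re_trace_smul {M : Matrix n n ℂ} (hM : M.PosSemidef) :
    M.trace.re • M.trace.re⁻¹ • M = M := by
  obtain h | h := eq_or_ne M.trace.re 0
  · have trace_eq : M.trace = 0 := Complex.ext h (Complex.le_def.1 hM.trace_nonneg).2.symm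
    simp [hM.trace_eq_zero_iff.1 trace_eq]
  · rw [smul_smul, mul_inv_cancel₀ h, one_smul]

variable [DecidableEq n]

theorem vnEntropy_eq_sum_negMulLog {M : Matrix n n ℂ} (hM : M.IsHermitian) :
    vnEntropy M = (∑ k, Real.negMulLog (hM.eigenvalues k)) / Real.log 2 := by
  rw [vnEntropy, dif_pos hM, Finset.sum_div, ← Finset.sum_neg_distrib]
  refine Finset.sum_congr rfl fun k _ => ?_
  rw [Real.negMulLog, Real.logb]
  ring

theorem concaveOn_vnEntropy : ConcaveOn ℝ {M : Matrix n n ℂ | M.PosSemidef} vnEntropy := by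
  have posSemidef_combo {X Y : Matrix n n ℂ} (hX : X.PosSemidef) (hY : Y.PosSemidef) {a b : ℝ}
      (ha : 0 ≤ a) (hb : 0 ≤ b) : (a • X + b • Y).PosSemidef := (hX.smul ha).add (hY.smul hb)
  refine ⟨fun X hX Y hY a b ha hb _ => posSemidef_combo hX hY ha hb,
    fun X hX Y hY a b ha hb hab => ?_⟩
  have hZ := (posSemidef_combo hX hY ha hb).isHermitian
  rw [vnEntropy_eq_sum_negMulLog hX.isHermitian, vnEntropy_eq_sum_negMulLog hY.isHermitian,
    vnEntropy_eq_sum_negMulLog hZ, smul_eq_mul, smul_eq_mul, ← mul_div_assoc, ← mul_div_assoc,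
    ← add_div]
  gcongr
  exact sum_map_eigenvalues_concave Real.concaveOn_negMulLog hX.isHermitian hX.eigenvalues_nonneg
    hY.isHermitian hY.eigenvalues_nonneg ha hb hab hZ

/-- The positively homogeneous extension `tr M · S(M / tr M)` of the von Neumann entropy from states
to unnormalised states. It lets `pᵢ S(ρ_{B|i})` be written in terms of the unnormalised conditional
state alone. At `tr M = 0` its value is `0`. -/
def homEntropy (M : Matrix n n ℂ) : ℝ :=
  M.trace.re * vnEntropy (M.trace.re⁻¹ • M)

theorem homEntropy_smul (c : ℝ) (M : Matrix n n ℂ) : homEntropy (c • M) = c * homEntropy M := by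
  obtain rfl | hc := eq_or_ne c 0
  · simp [homEntropy]
  · have trace_re : (c • M).trace.re = c * M.trace.re := by simp
    have normalise_eq : (c * M.trace.re)⁻¹ • c • M = M.trace.re⁻¹ • M := by
      rw [smul_smul, _root_.mul_inv_rev, inv_mul_cancel_right₀ hc]
    rw [homEntropy, homEntropy, trace_re, normalise_eq, mul_assoc]

theorem sum_homEntropy_le (s : Finset ι) {M : ι → Matrix n n ℂ}
    (hM : ∀ i ∈ s, (M i).PosSemidef) : ∑ i ∈ s, homEntropy (M i) ≤ homEntropy (∑ i ∈ s, M i) := by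
  let t i := (M i).trace.re
  have ht : ∀ i ∈ s, 0 ≤ t i := fun i hi => (Complex.le_def.1 (hM i hi).trace_nonneg).1
  have hsum : (∑ i ∈ s, M i).trace.re = ∑ i ∈ s, t i := by rw [trace_sum, Complex.re_sum]
  rw [homEntropy, hsum]
  obtain h0 | hpos := (Finset.sum_nonneg ht).eq_or_lt
  · have ht0 := (Finset.sum_eq_zero_iff_of_nonneg ht).1 h0.symm
    rw [← h0, zero_mul]
    exact (Finset.sum_eq_zero fun i hi => mul_eq_zero_of_left (ht0 i hi) _).le
  set τ := ∑ i ∈ s, t i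
  calc ∑ i ∈ s, homEntropy (M i)
      = τ * ∑ i ∈ s, (t i / τ) • vnEntropy ((t i)⁻¹ • M i) := by
        rw [Finset.mul_sum]
        refine Finset.sum_congr rfl fun i _ => ?_
        rw [smul_eq_mul, ← mul_assoc, mul_div_cancel₀ _ hpos.ne', homEntropy]
    _ ≤ τ * vnEntropy (∑ i ∈ s, (t i / τ) • (t i)⁻¹ • M i) := by
        gcongr
        refine concaveOn_vnEntropy.le_map_sum (fun i hi => div_nonneg (ht i hi) hpos.le) ?_
          fun i hi => (hM i hi).smul (inv_nonneg.2 (ht i hi))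
        rw [← Finset.sum_div, div_self hpos.ne']
    _ = τ * vnEntropy (τ⁻¹ • ∑ i ∈ s, M i) := by
        rw [Finset.smul_sum]
        congr 2
        refine Finset.sum_congr rfl fun i hi => ?_
        rw [div_eq_inv_mul, mul_smul, re_trace_smul_inv_re_trace_smul (hM i hi)]

end Entropy

section ConditionalBlocks

variable {A B C : Type*}

/-- The unnormalised conditional state `tr_A((|i⟩⟨i|⊗1) σ_AB)` of `B` given outcome `i` on `A`. -/
def condBlock (σ : Matrix (A × B) (A × B) ℂ) (i : A) : Matrix B B ℂ :=
  σ.submatrix (Prod.mk i) (Prod.mk i)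

theorem ptrA_eq_sum_condBlock [Fintype A] (σ : Matrix (A × B) (A × B) ℂ) :
    ptrA σ = ∑ i, condBlock σ i := by
  ext b b'
  simp [ptrA, condBlock, Matrix.sum_apply]

variable [Fintype A] [Fintype B] [Fintype C] [DecidableEq A] [DecidableEq B] [DecidableEq C]

theorem Jinc_eq_sub_sum_homEntropy (σ : Matrix (A × B) (A × B) ℂ) :
    Jinc σ = vnEntropy (ptrA σ) - ∑ i, homEntropy (condBlock σ i) := by
  have condB_eq (i : A) : condB σ i = (condBlock σ i).trace.re⁻¹ • condBlock σ i := by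
    rw [← Complex.coe_smul, Complex.ofReal_inv]
    rfl
  simp only [Jinc, condB_eq]
  rfl

theorem Jinc_le_of_condBlock_eq_sum {ρ : Matrix (A × B) (A × B) ℂ} (hρ : ρ.PosSemidef)
    {σ : Matrix (C × B) (C × B) ℂ} {T : C → A → ℝ} (hT : ∀ j i, 0 ≤ T j i)
    (hT_sum : ∀ i, ∑ j, T j i = 1)
    (hσ : ∀ j, condBlock σ j = ∑ i, T j i • condBlock ρ i) : Jinc σ ≤ Jinc ρ := by
  have hptr : ptrA σ = ptrA ρ := by
    simp only [ptrA_eq_sum_condBlock, hσ]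
    rw [Finset.sum_comm]
    simp only [← Finset.sum_smul, hT_sum, one_smul]
  rw [Jinc_eq_sub_sum_homEntropy, Jinc_eq_sub_sum_homEntropy, hptr]
  refine sub_le_sub_left ?_ _
  calc ∑ i, homEntropy (condBlock ρ i)
      = ∑ j, ∑ i, homEntropy (T j i • condBlock ρ i) := by
        rw [Finset.sum_comm]
        simp only [homEntropy_smul, ← Finset.sum_mul, hT_sum, one_mul]
    _ ≤ ∑ j, homEntropy (condBlock σ j) := Finset.sum_le_sum fun j _ => by
        rw [hσ]
        exact sum_homEntropy_le _ fun i _ => (hρ.submatrix _).smul (hT j i)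

end ConditionalBlocks

theorem deph_eq_diagonal {n : Type*} [DecidableEq n] (M : Matrix n n ℂ) :
    deph M = diagonal M.diag := by
  ext i j
  obtain rfl | h := eq_or_ne i j <;> simp [deph, *]

theorem submatrix_kronecker_one_mul_mul {R A B C : Type*} [CommSemiring R] [StarRing R]
    [Fintype A] [Fintype B] [DecidableEq B] (K : Matrix C A R) (ρ : Matrix (A × B) (A × B) R)
    (b b' : B) :
    ((K ⊗ₖ (1 : Matrix B B R)) * ρ * (K ⊗ₖ (1 : Matrix B B R))ᴴ).submatrix (·, b) (·, b') =
      K * ρ.submatrix (·, b) (·, b') * Kᴴ := by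
  ext j j'
  simp [mul_apply, Fintype.sum_prod_type, one_apply, apply_ite]

section Kraus

variable {ι A B C : Type*} [Fintype ι]

/-- The classical transition probabilities `⟨j|Λ(|i⟩⟨i|)|j⟩` of the channel `Λ` with Kraus operators
`K`. -/
def transitionProb (K : ι → Matrix C A ℂ) (j : C) (i : A) : ℝ :=
  ∑ l, ‖K l j i‖ ^ 2

theorem transitionProb_nonneg (K : ι → Matrix C A ℂ) (j : C) (i : A) :
    0 ≤ transitionProb K j i :=
  Finset.sum_nonneg fun _ _ => sq_nonneg _

theorem sum_transitionProb [Fintype C] [DecidableEq A] {K : ι → Matrix C A ℂ}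
    (hK : ∑ l, (K l)ᴴ * K l = 1) (i : A) : ∑ j, transitionProb K j i = 1 := by
  have h : ∑ l, ((K l)ᴴ * K l) i i = 1 := by rw [← Matrix.sum_apply, hK, one_apply_eq]
  have entry (l : ι) : ((K l)ᴴ * K l) i i = ((∑ j, ‖K l j i‖ ^ 2 : ℝ) : ℂ) := by
    simpa using mul_conjTranspose_apply_self (K l)ᴴ i
  simp only [entry, ← Complex.ofReal_sum] at h
  simp only [transitionProb]
  rw [Finset.sum_comm]
  exact_mod_cast h

variable [Fintype A] [DecidableEq A]

theorem sum_kraus_diagonal_apply_self (K : ι → Matrix C A ℂ) (d : A → ℂ) (j : C) :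
    (∑ l, K l * diagonal d * (K l)ᴴ) j j = ∑ i, transitionProb K j i • d i := by
  simp only [Matrix.sum_apply, mul_diagonal_mul_conjTranspose_apply_self, transitionProb,
    Finset.sum_smul]
  rw [Finset.sum_comm]
  rfl

variable [DecidableEq C]

/-- The channel with Kraus operators `K` is coherence non-activating, `Δ∘Λ = Δ∘Λ∘Δ`. The input and
output systems may differ. -/
def IsCoherenceNonactivating (K : ι → Matrix C A ℂ) : Prop :=
  ∀ M : Matrix A A ℂ, deph (∑ l, K l * M * (K l)ᴴ) = deph (∑ l, K l * deph M * (K l)ᴴ)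

theorem IsCoherenceNonactivating.sum_kraus_apply_self {K : ι → Matrix C A ℂ}
    (hCNA : IsCoherenceNonactivating K) (M : Matrix A A ℂ) (j : C) :
    (∑ l, K l * M * (K l)ᴴ) j j = ∑ i, transitionProb K j i • M i i := by
  have h := hCNA M
  simp only [deph_eq_diagonal, diagonal_injective.eq_iff] at h
  exact (congrFun h j).trans (sum_kraus_diagonal_apply_self K M.diag j)

theorem IsCoherenceNonactivating.condBlock_sum_kraus [Fintype B] [DecidableEq B]
    {K : ι → Matrix C A ℂ} (hCNA : IsCoherenceNonactivating K)
    (ρ : Matrix (A × B) (A × B) ℂ) (j : C) :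
    condBlock (∑ l, (K l ⊗ₖ (1 : Matrix B B ℂ)) * ρ * (K l ⊗ₖ (1 : Matrix B B ℂ))ᴴ) j =
      ∑ i, transitionProb K j i • condBlock ρ i := by
  ext b b'
  have slice (l : ι) := congr_fun₂ (submatrix_kronecker_one_mul_mul (K l) ρ b b') j j
  have h := hCNA.sum_kraus_apply_self (ρ.submatrix (·, b) (·, b')) j
  simp only [Matrix.sum_apply, ← slice] at h
  simpa only [condBlock, Matrix.sum_apply, submatrix_apply, Matrix.smul_apply] using h

end Kraus

theorem stmt16_general {ι A B C : Type*} [Fintype ι] [Fintype A] [Fintype B] [Fintype C]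
    [DecidableEq A] [DecidableEq B] [DecidableEq C]
    {ρ : Matrix (A × B) (A × B) ℂ} (hρ : ρ.PosSemidef)
    {K : ι → Matrix C A ℂ} (hK : ∑ l, (K l)ᴴ * K l = 1) (hCNA : IsCoherenceNonactivating K) :
    Jinc (∑ l, (K l ⊗ₖ (1 : Matrix B B ℂ)) * ρ * (K l ⊗ₖ (1 : Matrix B B ℂ))ᴴ) ≤ Jinc ρ :=
  Jinc_le_of_condBlock_eq_sum hρ (transitionProb_nonneg K) (sum_transitionProb hK)
    (hCNA.condBlock_sum_kraus ρ)

/-- the incoherent correlation cannot be increased by a coherence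
non-activating channel (`Δ∘Λ = Δ∘Λ∘Δ`) acting on `A`. -/
theorem stmt16 {dA dB L : ℕ}
    (ρ : Matrix (Fin dA × Fin dB) (Fin dA × Fin dB) ℂ) (hρ : IsDensityMatrix ρ)
    (K : Fin L → Matrix (Fin dA) (Fin dA) ℂ)
    (hK : ∑ l, (K l)ᴴ * K l = 1)
    (hCNA : ∀ M : Matrix (Fin dA) (Fin dA) ℂ,
      deph (∑ l, K l * M * (K l)ᴴ) = deph (∑ l, K l * deph M * (K l)ᴴ)) :
    Jinc (∑ l, (K l ⊗ₖ (1 : Matrix (Fin dB) (Fin dB) ℂ)) * ρ *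
        (K l ⊗ₖ (1 : Matrix (Fin dB) (Fin dB) ℂ))ᴴ) ≤ Jinc ρ :=
  stmt16_general hρ.1 hK hCNA
end
end
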